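/- Let n = (n₁;n₂) ∈ ℤ₊^{m₁+1}(•) × ℤ₊^{m₂+1}(•) with |n₁| ≥ 1, and let S¹ = N(σ¹_0,…,σ¹_{m₁}), S² = N(σ²_0,…,σ²_{m₂}) be Nikishin systems with σ¹_0 = σ²_0. Then n is normal: every mixed type multiple orthogonal polynomial system (a_{n,0},…,a_{n,m₁}) relative to n and (S¹,S²) satisfies deg a_{n,j} = n_{1,j} − 1 for every j = 0,…,m₁; moreover, any two such systems are proportional (the solution is uniquely determined up to a constant factor). -/

import Mathlib

open MeasureTheory Polynomial Set Filter

noncomputable section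

/-- The support of a Borel measure on `ℝ`: points all of whose open neighborhoods
have positive measure. -/
def msupport (μ : Measure ℝ) : Set ℝ :=
  {x : ℝ | ∀ U : Set ℝ, IsOpen U → x ∈ U → μ U ≠ 0}

/-- The copy of a real set inside `ℂ`. -/
def cpx (s : Set ℝ) : Set ℂ := (fun x : ℝ => (x : ℂ)) '' s

/-- `nikhat μ e j g` is the Cauchy transform of the measure `⟨σ_j, …, σ_{j+g}⟩`,
where `σ_i = (e i) • (μ i)` is a measure of constant sign. -/
def nikhat (μ : ℕ → Measure ℝ) (e : ℕ → ℝ) : ℕ → ℕ → ℂ → ℂ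
  | j, 0, z => (e j : ℂ) * ∫ t, 1 / (z - (t : ℂ)) ∂(μ j)
  | j, g + 1, z => (e j : ℂ) * ∫ t, nikhat μ e (j + 1) g (t : ℂ) / (z - (t : ℂ)) ∂(μ j)

/-- The Cauchy transform `ŝ_{j+1,k}` of `s_{j+1,k} = ⟨σ_{j+1},…,σ_k⟩`, with the
convention that it is `≡ 1` when `k ≤ j`. -/
def wt (μ : ℕ → Measure ℝ) (e : ℕ → ℝ) (j k : ℕ) (z : ℂ) : ℂ :=
  if j < k then nikhat μ e (j + 1) (k - (j + 1)) z else 1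

/-- Integral of `f` against the measure `s_{j,k} = ⟨σ_j, …, σ_k⟩`
(whose density with respect to `σ_j` is `ŝ_{j+1,k}`). -/
def sInt (μ : ℕ → Measure ℝ) (e : ℕ → ℝ) (j k : ℕ) (f : ℝ → ℂ) : ℂ :=
  (e j : ℂ) * ∫ x, f x * wt μ e j k (x : ℂ) ∂(μ j)

/-- The linear form `𝒜_{n,j}(z) = ∑_{k=j}^{m₁} a_k(z) ŝ¹_{j+1,k}(z)`. -/
def linForm (μ : ℕ → Measure ℝ) (e : ℕ → ℝ) (m₁ j : ℕ) (A : ℕ → Polynomial ℝ)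
    (z : ℂ) : ℂ :=
  ∑ k ∈ Finset.Icc j m₁, Polynomial.aeval z (A k) * wt μ e j k z

/-- The linear forms with negative index:
`𝒜_{n,-j-1}(z) = ∫ 𝒜_{n,-j}(x) dσ²_j(x) / (z - x)`. -/
def linFormNeg (μ : ℕ → Measure ℝ) (e : ℕ → ℝ) (F : ℂ → ℂ) : ℕ → ℂ → ℂ
  | 0 => F
  | j + 1 => fun z => (e j : ℂ) * ∫ x, linFormNeg μ e F j (x : ℂ) / (z - (x : ℂ)) ∂(μ j)

/-- A Nikishin system `N(σ_0,…,σ_m)` of measures of constant sign `σ_j = (e j) • (μ j)`,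
with `Co(supp σ_j) = Δ_j = [a j, b j]` and `Δ_j ∩ Δ_{j+1} = ∅`. -/
structure NikSys (m : ℕ) where
  μ : ℕ → Measure ℝ
  e : ℕ → ℝ
  a : ℕ → ℝ
  b : ℕ → ℝ
  fin : ∀ j, IsFiniteMeasure (μ j)
  sgn : ∀ j, e j = 1 ∨ e j = -1
  hull : ∀ j ≤ m, convexHull ℝ (msupport (μ j)) = Set.Icc (a j) (b j)
  inf : ∀ j ≤ m, (msupport (μ j)).Infinite
  disj : ∀ j < m, Set.Icc (a j) (b j) ∩ Set.Icc (a (j + 1)) (b (j + 1)) = ∅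

/-- Decreasing multi-index (the class `ℤ₊^{m+1}(•)`). -/
def Decr (m : ℕ) (n : ℕ → ℕ) : Prop := ∀ j < m, n (j + 1) ≤ n j

/-- `|n| = n_0 + ⋯ + n_m`. -/
def msum (m : ℕ) (n : ℕ → ℕ) : ℕ := ∑ j ∈ Finset.range (m + 1), n j

/-- `N_{1,j} = n_j + ⋯ + n_m` (partial tail sums). -/
def tailSum (m : ℕ) (n : ℕ → ℕ) (j : ℕ) : ℕ := ∑ k ∈ Finset.Icc j m, n k

/-- Mixed type multiple orthogonal polynomials relative to `(n1;n2)` and `(S1,S2)`. -/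
def IsMOP (m₁ m₂ : ℕ) (S1 : NikSys m₁) (S2 : NikSys m₂)
    (n1 n2 : ℕ → ℕ) (A : ℕ → Polynomial ℝ) : Prop :=
  (∀ j ≤ m₁, (A j).degree < (n1 j : WithBot ℕ)) ∧
  (∃ j ≤ m₁, A j ≠ 0) ∧
  ∀ k ≤ m₂, ∀ ν < n2 k,
    sInt S2.μ S2.e 0 k (fun x => (x : ℂ) ^ ν * linForm S1.μ S1.e m₁ 0 A (x : ℂ)) = 0

/-- The "monic" normalization: the last entry different from zero has leading
coefficient `1`. -/
def MonicLast (m₁ : ℕ) (A : ℕ → Polynomial ℝ) : Prop :=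
  ∃ j ≤ m₁, (A j).Monic ∧ ∀ k, j < k → k ≤ m₁ → A k = 0

/-- `n^l`: increase the `l`-th component by one. -/
def bump (l : ℕ) (n : ℕ → ℕ) : ℕ → ℕ := fun j => if j = l then n j + 1 else n j

/-!
Write `w_k` for the real-valued restriction of `ŝ_{1,k}` to `Δ_0`, and `𝒜 = ∑ a_j w¹_j` for the
linear form of the first system.

* Let a continuous `f` be such that `f w²_k` is orthogonal with respect to `σ²_0` to polynomials of
  degree `< n_{2,k}`, for all `k`. Then `f` has at least `|n₂|` zeros on `Δ²_0`. Indeed, the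
  Cauchy transform of `f dσ²_0` satisfies the analogous relations for the system without its first
  measure, so by induction it has `n_{2,1} + ⋯ + n_{2,m₂}` zeros on `Δ²_1`; dividing `f` by the
  polynomial with these zeros yields that many orthogonality relations more.
* A form `∑ a_j w¹_j` with `deg a_j < n_j` and at least `|n|` zeros on `Δ¹_0` has all `a_j = 0`.
  Indeed, dividing by the polynomial with these zeros and expanding in partial fractions,
  `a_0` drops out and `∑_{j ≥ 1} a_j ŝ_{2,j}` (with `ŝ_{2,1} = 1`) acquires orthogonality relations
  with respect to `σ¹_1`, hence at least `n_1 + ⋯ + n_m` zeros on `Δ¹_1`, and the induction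
  hypothesis applies.

Both inductions only need `n_l ≤ n_k + 1` for `k < l`, a condition which survives lowering one
component of a decreasing multi-index by `1`. Hence, if `deg a_j < n_{1,j} - 1` for some `j`, the
second fact applies to `n₁` with its `j`-th component lowered, whose length is `|n₂|`, and gives
`a = 0`. Uniqueness follows by applying this to the difference of one solution and the multiple of
the other that cancels the leading term in the component `j = 0`.
-/

open Lagrange (nodal nodalWeight)

/-! ### Polynomials -/

section Polynomials

lemma degree_mul_lt_of_lt {R : Type*} [Semiring R] {P Q : R[X]} {a b : ℕ}
    (hP : P.degree < a) (hQ : Q.degree < b) : (P * Q).degree < (a + b - 1 : ℕ) := by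
  rcases eq_or_ne P 0 with rfl | hP0
  · simp [bot_lt_iff_ne_bot]
  rcases eq_or_ne Q 0 with rfl | hQ0
  · simp [bot_lt_iff_ne_bot]
  rw [← natDegree_lt_iff_degree_lt hP0] at hP
  rw [← natDegree_lt_iff_degree_lt hQ0] at hQ
  calc (P * Q).degree ≤ ((P.natDegree + Q.natDegree : ℕ) : WithBot ℕ) :=
        degree_le_of_natDegree_le natDegree_mul_le
    _ < (a + b - 1 : ℕ) := by exact_mod_cast (by omega)

lemma degree_divByMonic_lt_of_lt {R : Type*} [CommRing R] {Q W : R[X]} (hW : W.Monic) {n : ℕ}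
    (hQ : Q.degree < (n + W.natDegree : ℕ)) : (Q /ₘ W).degree < n := by
  rcases eq_or_ne (Q /ₘ W) 0 with h0 | h0
  · simp [h0, bot_lt_iff_ne_bot]
  have := Nontrivial.of_polynomial_ne h0
  have hQ0 : Q ≠ 0 := by rintro rfl; simp at h0
  rw [← natDegree_lt_iff_degree_lt hQ0] at hQ
  rw [← natDegree_lt_iff_degree_lt h0, natDegree_divByMonic Q hW]
  have hWQ : W.natDegree ≤ Q.natDegree := by
    by_contra! h
    exact h0 ((divByMonic_eq_zero_iff hW).2 (degree_lt_degree h))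
  omega

lemma exists_ne_zero_degree_sub_smul_lt {F : Type*} [Field F] {P Q : F[X]} {n : ℕ}
    (hP : P.degree = n) (hQ : Q.degree = n) : ∃ c : F, c ≠ 0 ∧ (Q - c • P).degree < n := by
  have hP0 : P ≠ 0 := by rintro rfl; simp at hP
  have hQ0 : Q ≠ 0 := by rintro rfl; simp at hQ
  have hlP := leadingCoeff_ne_zero.2 hP0
  have hc : Q.leadingCoeff / P.leadingCoeff ≠ 0 := div_ne_zero (leadingCoeff_ne_zero.2 hQ0) hlP
  refine ⟨_, hc, hQ ▸ degree_sub_lt_left ?_ hQ0 ?_⟩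
  · rw [degree_smul_of_smul_regular _ (IsSMulRegular.of_ne_zero hc), hP, hQ]
  · rw [leadingCoeff_smul_of_smul_regular _ (IsSMulRegular.of_ne_zero hc), smul_eq_mul,
      div_mul_cancel₀ _ hlP]

lemma eval_nodal_ne_zero {F : Type*} [Field F] {Z : Finset F} {x : F} (hx : x ∉ Z) :
    (nodal Z id).eval x ≠ 0 :=
  Lagrange.eval_nodal_not_at_node (by grind)

lemma eval_nodal_ne_zero_of_disjoint {F : Type*} [Field F] {K L : Set F} (hKL : Disjoint K L)
    {Z : Finset F} (hZ : ↑Z ⊆ L) {x : F} (hx : x ∈ K) : (nodal Z id).eval x ≠ 0 :=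
  eval_nodal_ne_zero fun h ↦ hKL.ne_of_mem hx (hZ h) rfl

lemma eval_div_eval_nodal {F : Type*} [Field F] [DecidableEq F] {Z : Finset F} {P : F[X]}
    (hP : P.degree < Z.card) {x : F} (hx : x ∉ Z) :
    P.eval x / (nodal Z id).eval x = ∑ z ∈ Z, nodalWeight Z id z * P.eval z / (x - z) := by
  rw [div_eq_iff (eval_nodal_ne_zero hx)]
  conv_lhs => rw [Lagrange.eq_interpolate (s := Z) (v := id) (Set.injOn_id _) hP]
  rw [Lagrange.eval_interpolate_not_at_node _ (by grind), mul_comm]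
  congr 1
  refine Finset.sum_congr rfl fun z _ ↦ ?_
  simp only [id]
  ring

lemma sum_nodalWeight_mul_eval_eq_zero {F : Type*} [Field F] [DecidableEq F] {Z : Finset F}
    {P : F[X]} (hP : P.degree < (Z.card - 1 : ℕ)) :
    ∑ z ∈ Z, nodalWeight Z id z * P.eval z = 0 := by
  have h := Lagrange.coeff_eq_sum (s := Z) (v := id) (Set.injOn_id _)
    (hP.trans_le (by exact_mod_cast Nat.sub_le _ _))
  rw [coeff_eq_zero_of_degree_lt hP] at h
  rw [h]
  refine Finset.sum_congr rfl fun z _ ↦ ?_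
  rw [nodalWeight, Finset.prod_inv_distrib, div_eq_mul_inv, mul_comm]
  rfl

lemma forall_pos_or_forall_neg_of_ne_zero {X : Type*} [TopologicalSpace X] {I : Set X}
    (hI : IsPreconnected I) {f : X → ℝ} (hf : ContinuousOn f I) (h0 : ∀ x ∈ I, f x ≠ 0) :
    (∀ x ∈ I, 0 < f x) ∨ ∀ x ∈ I, f x < 0 := by
  by_contra! ⟨⟨x, hx, hfx⟩, y, hy, hfy⟩
  obtain ⟨z, hz, hfz⟩ := hI.intermediate_value hx hy hf ⟨hfx, hfy⟩
  exact h0 z hz hfz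

/-- The polynomial is built by passing the zeros from left to right, adding a factor
`c - X` at those `c` where the product constructed so far changes sign. -/
lemma exists_polynomial_mul_nonneg (Z : Finset ℝ) {I : Set ℝ} (hI : I.OrdConnected) {f : ℝ → ℝ}
    (hf : ContinuousOn f I) (hZ : ∀ x ∈ I, f x = 0 ↔ x ∈ Z) :
    ∃ q : ℝ[X], q.degree ≤ Z.card ∧ (∀ x, q.eval x = 0 → x ∈ Z) ∧
      ∀ x ∈ I, 0 ≤ q.eval x * f x := by
  induction Z using Finset.induction_on_max generalizing I with
  | empty =>
    rcases forall_pos_or_forall_neg_of_ne_zero hI.isPreconnected hf (by simpa using hZ) with h | h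
    · exact ⟨1, by simp, by simp, fun x hx ↦ by simpa using (h x hx).le⟩
    · exact ⟨-1, by simp, by simp, fun x hx ↦ by simpa using (h x hx).le⟩
  | insert c Z hc ih =>
    have hcZ : c ∉ Z := fun h ↦ (hc c h).false
    obtain ⟨q, hqdeg, hqZ, hqpos⟩ := ih (I := I ∩ Iio c) (hI.inter ordConnected_Iio)
      (hf.mono inter_subset_left) fun x hx ↦ by simp [hZ x hx.1, (mem_Iio.1 hx.2).ne]
    have hcard : (Z.card : WithBot ℕ) ≤ (insert c Z).card := by
      exact_mod_cast Finset.card_le_card (Finset.subset_insert c Z)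
    have hright : ∀ x ∈ I ∩ Ioi c, q.eval x * f x ≠ 0 := fun x hx ↦ by
      have hxZ : x ∉ Z := fun h ↦ lt_asymm (hc x h) hx.2
      refine mul_ne_zero (mt (hqZ x) hxZ) (mt (hZ x hx.1).1 ?_)
      simp [hxZ, (mem_Ioi.1 hx.2).ne']
    rcases forall_pos_or_forall_neg_of_ne_zero (hI.inter ordConnected_Ioi).isPreconnected
      (q.continuous.continuousOn.mul (hf.mono inter_subset_left)) hright with h | h
    · refine ⟨q, hqdeg.trans hcard, fun x hx ↦ Finset.mem_insert_of_mem (hqZ x hx), fun x hx ↦ ?_⟩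
      rcases lt_trichotomy x c with hxc | rfl | hxc
      · exact hqpos x ⟨hx, hxc⟩
      · simp [(hZ x hx).2 (Finset.mem_insert_self x Z)]
      · exact (h x ⟨hx, hxc⟩).le
    · refine ⟨(C c - X) * q, ?_, fun x hx ↦ ?_, fun x hx ↦ ?_⟩
      · rw [Finset.card_insert_of_notMem hcZ, degree_mul, ← neg_sub, degree_neg, degree_X_sub_C,
          add_comm]
        exact_mod_cast add_le_add_left hqdeg 1
      · rcases mul_eq_zero.1 ((eval_mul (R := ℝ)).symm.trans hx) with hx | hx
        · simp [sub_eq_zero.1 (by simpa using hx : c - x = 0)]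
        · exact Finset.mem_insert_of_mem (hqZ x hx)
      · have hsplit : ((C c - X) * q).eval x * f x = (c - x) * (q.eval x * f x) := by
          simp [mul_assoc]
        rw [hsplit]
        rcases lt_trichotomy x c with hxc | rfl | hxc
        · exact mul_nonneg (sub_pos.2 hxc).le (hqpos x ⟨hx, hxc⟩)
        · simp
        · exact mul_nonneg_of_nonpos_of_nonpos (sub_neg.2 hxc).le (h x ⟨hx, hxc⟩).le

end Polynomials

/-! ### Cauchy transforms -/

section CauchyTransform

/-- The real Cauchy transform `x ↦ ∫ f(t) dμ(t) / (x - t)` of the measure `f dμ`, meant for `x`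
outside the support of `μ`. -/
def cauchyTransform (μ : Measure ℝ) (f : ℝ → ℝ) (x : ℝ) : ℝ := ∫ t, f t / (x - t) ∂μ

lemma integrable_of_continuousOn_compact {X : Type*} [TopologicalSpace X] [T2Space X]
    [MeasurableSpace X] [BorelSpace X] {μ : Measure X} [IsFiniteMeasure μ] {K : Set X}
    (hK : IsCompact K) (hμ : ∀ᵐ x ∂μ, x ∈ K) {f : X → ℝ} (hf : ContinuousOn f K) :
    Integrable f μ := by
  rw [← Measure.restrict_eq_self_of_ae_mem hμ]
  exact hf.integrableOn_compact hK

variable {μ ν : Measure ℝ} [IsFiniteMeasure μ] [IsFiniteMeasure ν] {K L : Set ℝ} {f g : ℝ → ℝ}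

lemma integrable_eval_mul (hK : IsCompact K) (hμ : ∀ᵐ x ∂μ, x ∈ K) (hf : ContinuousOn f K)
    (Q : ℝ[X]) : Integrable (fun x ↦ Q.eval x * f x) μ :=
  integrable_of_continuousOn_compact hK hμ (Q.continuous.continuousOn.mul hf)

lemma continuousOn_div_sub (hKL : Disjoint K L) (hf : ContinuousOn f K) :
    ContinuousOn (fun p : ℝ × ℝ ↦ f p.2 / (p.1 - p.2)) (L ×ˢ K) :=
  (hf.comp continuousOn_snd fun _ hp ↦ hp.2).div (by fun_prop)
    fun _ hp ↦ sub_ne_zero.2 (hKL.symm.ne_of_mem hp.1 hp.2)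

lemma integrable_div_sub (hK : IsCompact K) (hKL : Disjoint K L) (hμ : ∀ᵐ t ∂μ, t ∈ K)
    (hf : ContinuousOn f K) {x : ℝ} (hx : x ∈ L) : Integrable (fun t ↦ f t / (x - t)) μ :=
  integrable_of_continuousOn_compact hK hμ <|
    hf.div (by fun_prop) fun _ ht ↦ sub_ne_zero.2 (hKL.symm.ne_of_mem hx ht)

lemma continuousOn_cauchyTransform (hK : IsCompact K) (hL : IsCompact L) (hKL : Disjoint K L)
    (hμ : ∀ᵐ t ∂μ, t ∈ K) (hf : ContinuousOn f K) :
    ContinuousOn (cauchyTransform μ f) L := by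
  obtain ⟨B, hB⟩ := (hL.prod hK).exists_bound_of_continuousOn (continuousOn_div_sub hKL hf)
  refine continuousOn_of_dominated (bound := fun _ ↦ B) (fun x hx ↦ ?_) (fun x hx ↦ ?_)
    (integrable_const _) ?_
  · exact (integrable_div_sub hK hKL hμ hf hx).aestronglyMeasurable
  · filter_upwards [hμ] with t ht using hB (x, t) ⟨hx, ht⟩
  · filter_upwards [hμ] with t ht
    exact continuousOn_const.div (by fun_prop) fun x hx ↦ sub_ne_zero.2 (hKL.symm.ne_of_mem hx ht)

lemma integral_mul_cauchyTransform (hK : IsCompact K) (hL : IsCompact L) (hKL : Disjoint K L)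
    (hμ : ∀ᵐ t ∂μ, t ∈ K) (hν : ∀ᵐ x ∂ν, x ∈ L) (hf : ContinuousOn f K) (hg : ContinuousOn g L) :
    ∫ x, g x * cauchyTransform μ f x ∂ν = -∫ t, f t * cauchyTransform ν g t ∂μ := by
  have hint : Integrable (fun p : ℝ × ℝ ↦ g p.1 * (f p.2 / (p.1 - p.2))) (ν.prod μ) :=
    integrable_of_continuousOn_compact (hL.prod hK)
      ((Measure.quasiMeasurePreserving_fst.ae hν).and (Measure.quasiMeasurePreserving_snd.ae hμ))
      ((hg.comp continuousOn_fst fun _ hp ↦ hp.1).mul (continuousOn_div_sub hKL hf))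
  calc ∫ x, g x * cauchyTransform μ f x ∂ν
      = ∫ x, ∫ t, g x * (f t / (x - t)) ∂μ ∂ν := by simp_rw [cauchyTransform, integral_const_mul]
    _ = ∫ t, ∫ x, g x * (f t / (x - t)) ∂ν ∂μ := integral_integral_swap hint
    _ = ∫ t, -(f t * cauchyTransform ν g t) ∂μ := by
      refine integral_congr_ae (.of_forall fun t ↦ ?_)
      simp only [cauchyTransform, ← integral_const_mul, ← integral_neg]
      refine integral_congr_ae (.of_forall fun x ↦ ?_)
      simp only [← neg_sub t x, div_neg]
      ring
    _ = -∫ t, f t * cauchyTransform ν g t ∂μ := integral_neg _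

lemma continuousOn_div_nodal (hKL : Disjoint K L) (hf : ContinuousOn f K) {Z : Finset ℝ}
    (hZ : ↑Z ⊆ L) : ContinuousOn (fun t ↦ f t / (nodal Z id).eval t) K :=
  hf.div (nodal Z id).continuous.continuousOn fun _ ↦ eval_nodal_ne_zero_of_disjoint hKL hZ

lemma integral_eval_mul_div_nodal (hK : IsCompact K) (hKL : Disjoint K L)
    (hμ : ∀ᵐ t ∂μ, t ∈ K) (hf : ContinuousOn f K) {Z : Finset ℝ} (hZ : ↑Z ⊆ L) {P : ℝ[X]}
    (hP : P.degree < Z.card) :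
    ∫ t, P.eval t * (f t / (nodal Z id).eval t) ∂μ =
      -∑ z ∈ Z, nodalWeight Z id z * P.eval z * cauchyTransform μ f z := by
  have hpartial : ∀ᵐ t ∂μ, P.eval t * (f t / (nodal Z id).eval t) =
      ∑ z ∈ Z, -(nodalWeight Z id z * P.eval z) * (f t / (z - t)) := by
    filter_upwards [hμ] with t ht
    rw [mul_div_left_comm, eval_div_eval_nodal hP fun h ↦ hKL.ne_of_mem ht (hZ h) rfl,
      Finset.mul_sum]
    refine Finset.sum_congr rfl fun z _ ↦ ?_
    rw [← neg_sub z t, div_neg]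
    ring
  rw [integral_congr_ae hpartial, integral_finsetSum _ fun z hz ↦
    (integrable_div_sub hK hKL hμ hf (hZ hz)).const_mul _]
  simp_rw [integral_const_mul, neg_mul, Finset.sum_neg_distrib, cauchyTransform]

end CauchyTransform

/-! ### Orthogonality to polynomials -/

section Orthogonality

/-- `f` is orthogonal with respect to `μ` to all polynomials of degree `< n`. The products with
polynomials are not required to be integrable; this holds automatically for `f` continuous on a
compact set carrying `μ`. -/
def OrthogonalToDegreeLT (μ : Measure ℝ) (f : ℝ → ℝ) (n : ℕ) : Prop :=
  ∀ Q : ℝ[X], Q.degree < n → ∫ x, Q.eval x * f x ∂μ = 0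

namespace OrthogonalToDegreeLT

variable {μ ν : Measure ℝ} [IsFiniteMeasure μ] [IsFiniteMeasure ν] {K L : Set ℝ} {f g : ℝ → ℝ}
  {n : ℕ}

lemma of_integral_pow_mul (hK : IsCompact K) (hμ : ∀ᵐ x ∂μ, x ∈ K) (hf : ContinuousOn f K)
    (h : ∀ i < n, ∫ x, x ^ i * f x ∂μ = 0) : OrthogonalToDegreeLT μ f n := by
  intro Q hQ
  rcases eq_or_ne Q 0 with rfl | hQ0
  · simp
  rw [← natDegree_lt_iff_degree_lt hQ0] at hQ
  have hint (i : ℕ) : Integrable (fun x ↦ Q.coeff i * (x ^ i * f x)) μ :=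
    (integrable_of_continuousOn_compact hK hμ ((continuous_pow i).continuousOn.mul hf)).const_mul _
  simp_rw [eval_eq_sum_range' hQ, Finset.sum_mul, mul_assoc]
  rw [integral_finsetSum _ fun i _ ↦ hint i]
  refine Finset.sum_eq_zero fun i hi ↦ ?_
  rw [integral_const_mul, h i (Finset.mem_range.1 hi), mul_zero]

lemma sub_const_mul (hK : IsCompact K) (hμ : ∀ᵐ x ∂μ, x ∈ K) (hfc : ContinuousOn f K)
    (hgc : ContinuousOn g K) (hf : OrthogonalToDegreeLT μ f n) (hg : OrthogonalToDegreeLT μ g n)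
    (c : ℝ) : OrthogonalToDegreeLT μ (fun x ↦ f x - c * g x) n := by
  intro Q hQ
  simp_rw [mul_sub, mul_left_comm _ c]
  rw [integral_sub (integrable_eval_mul hK hμ hfc Q)
    ((integrable_eval_mul hK hμ hgc Q).const_mul c), integral_const_mul, hf Q hQ, hg Q hQ,
    mul_zero, sub_zero]

/-- Otherwise `f` has fewer than `n` zeros on `K`, and some polynomial of degree `< n` has the
same sign as `f` throughout. -/
theorem exists_finset_zeros (hK : IsCompact K) (hKc : K.OrdConnected) (hμ : ∀ᵐ x ∂μ, x ∈ K)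
    (hinf : μ.support.Infinite) (hfc : ContinuousOn f K) (hf : OrthogonalToDegreeLT μ f n) :
    ∃ Z : Finset ℝ, ↑Z ⊆ K ∧ Z.card = n ∧ ∀ z ∈ Z, f z = 0 := by
  suffices h : (n : ℕ∞) ≤ {x ∈ K | f x = 0}.encard by
    obtain ⟨T, hT, hTn⟩ := exists_subset_encard_eq h
    have hTfin : T.Finite := finite_of_encard_eq_coe hTn
    refine ⟨hTfin.toFinset, by simpa using hT.trans (sep_subset _ _), ?_, fun z hz ↦ ?_⟩
    · rw [hTfin.encard_eq_coe_toFinset_card] at hTn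
      exact_mod_cast hTn
    · exact (hT (hTfin.mem_toFinset.1 hz)).2
  by_contra! hlt
  have hfin : {x ∈ K | f x = 0}.Finite := finite_of_encard_le_coe hlt.le
  rw [hfin.encard_eq_coe_toFinset_card, Nat.cast_lt] at hlt
  obtain ⟨q, hqdeg, hqZ, hqpos⟩ := exists_polynomial_mul_nonneg hfin.toFinset hKc hfc (by simp_all)
  have hqf : ∀ᵐ x ∂μ, q.eval x * f x = 0 :=
    (integral_eq_zero_iff_of_nonneg_ae (hμ.mono hqpos) (integrable_eval_mul hK hμ hfc q)).1
      (hf q (hqdeg.trans_lt (by exact_mod_cast hlt)))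
  refine hinf (hfin.subset (Measure.support_subset_of_isClosed hfin.isClosed ?_))
  filter_upwards [hμ, hqf] with x hx hqfx
  rcases mul_eq_zero.1 hqfx with h | h
  · exact hfin.mem_toFinset.1 (hqZ x h)
  · exact ⟨hx, h⟩

lemma eval_mul_cauchyTransform (hK : IsCompact K) (hKL : Disjoint K L) (hμ : ∀ᵐ t ∂μ, t ∈ K)
    (hfc : ContinuousOn f K) (hf : OrthogonalToDegreeLT μ f n) {Q : ℝ[X]}
    (hQ : Q.degree < (n + 1 : ℕ)) {x : ℝ} (hx : x ∈ L) :
    Q.eval x * cauchyTransform μ f x = cauchyTransform μ (fun t ↦ Q.eval t * f t) x := by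
  have hquot : (Q /ₘ (X - C x)).degree < n :=
    degree_divByMonic_lt_of_lt (monic_X_sub_C x) (by rwa [natDegree_X_sub_C])
  have hdiv (t : ℝ) : (t - x) * (Q /ₘ (X - C x)).eval t = Q.eval t - Q.eval x := by
    simpa [modByMonic_X_sub_C_eq_C_eval] using
      congrArg (eval t) (X_sub_C_mul_divByMonic_eq_sub_modByMonic Q x)
  have hQf : ContinuousOn (fun t ↦ Q.eval t * f t) K := Q.continuous.continuousOn.mul hfc
  rw [← sub_eq_zero, cauchyTransform, cauchyTransform, ← integral_const_mul,
    ← integral_sub ((integrable_div_sub hK hKL hμ hfc hx).const_mul _)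
      (integrable_div_sub hK hKL hμ hQf hx), ← hf _ hquot]
  refine integral_congr_ae ?_
  filter_upwards [hμ] with t ht
  have hxt : x - t ≠ 0 := sub_ne_zero.2 (hKL.symm.ne_of_mem hx ht)
  field_simp
  linear_combination f t * hdiv t

lemma cauchyTransform_mul (hK : IsCompact K) (hL : IsCompact L) (hKL : Disjoint K L)
    (hμ : ∀ᵐ t ∂μ, t ∈ K) (hν : ∀ᵐ x ∂ν, x ∈ L) (hfc : ContinuousOn f K) (hgc : ContinuousOn g L)
    (hf : OrthogonalToDegreeLT μ f n) {k : ℕ} (hkn : k ≤ n + 1)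
    (hfg : OrthogonalToDegreeLT μ (fun t ↦ f t * cauchyTransform ν g t) k) :
    OrthogonalToDegreeLT ν (fun x ↦ cauchyTransform μ f x * g x) k := by
  intro Q hQ
  have hQn : Q.degree < (n + 1 : ℕ) := hQ.trans_le (by exact_mod_cast hkn)
  calc ∫ x, Q.eval x * (cauchyTransform μ f x * g x) ∂ν
      = ∫ x, g x * cauchyTransform μ (fun t ↦ Q.eval t * f t) x ∂ν := by
        refine integral_congr_ae ?_
        filter_upwards [hν] with x hx
        rw [← hf.eval_mul_cauchyTransform hK hKL hμ hfc hQn hx]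
        ring
    _ = -∫ t, Q.eval t * f t * cauchyTransform ν g t ∂μ :=
        integral_mul_cauchyTransform hK hL hKL hμ hν (Q.continuous.continuousOn.mul hfc) hgc
    _ = 0 := by simp_rw [mul_assoc, hfg Q hQ, neg_zero]

lemma div_nodal (hK : IsCompact K) (hKL : Disjoint K L) (hμ : ∀ᵐ t ∂μ, t ∈ K)
    (hfc : ContinuousOn f K) (hf : OrthogonalToDegreeLT μ f n) {Z : Finset ℝ} (hZ : ↑Z ⊆ L)
    (h0 : ∀ z ∈ Z, cauchyTransform μ f z = 0) :
    OrthogonalToDegreeLT μ (fun t ↦ f t / (nodal Z id).eval t) (n + Z.card) := by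
  intro Q hQ
  set W : ℝ[X] := nodal Z id
  have hW : W.Monic := Lagrange.nodal_monic
  have hrem : (Q %ₘ W).degree < Z.card :=
    (degree_modByMonic_lt Q hW).trans_eq Lagrange.degree_nodal
  have hquot : (Q /ₘ W).degree < n :=
    degree_divByMonic_lt_of_lt hW (by rwa [Lagrange.natDegree_nodal])
  have hsplit : ∀ᵐ t ∂μ, Q.eval t * (f t / W.eval t) =
      (Q %ₘ W).eval t * (f t / W.eval t) + (Q /ₘ W).eval t * f t := by
    filter_upwards [hμ] with t ht
    have hWt : W.eval t ≠ 0 := eval_nodal_ne_zero_of_disjoint hKL hZ ht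
    have hQt := congrArg (eval t) (modByMonic_add_div Q W)
    simp only [eval_add, eval_mul] at hQt
    field_simp
    linear_combination -(f t) * hQt
  rw [integral_congr_ae hsplit, integral_add (integrable_eval_mul hK hμ
    (continuousOn_div_nodal hKL hfc hZ) _)
    (integrable_eval_mul hK hμ hfc _), hf _ hquot, add_zero,
    integral_eval_mul_div_nodal hK hKL hμ hfc hZ hrem]
  simp +contextual [h0]

theorem exists_finset_zeros_of_div_nodal (hK : IsCompact K) (hKc : K.OrdConnected)
    (hKL : Disjoint K L) (hμ : ∀ᵐ x ∂μ, x ∈ K) (hinf : μ.support.Infinite)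
    (hfc : ContinuousOn f K) {Y : Finset ℝ} (hY : ↑Y ⊆ L)
    (hf : OrthogonalToDegreeLT μ (fun t ↦ f t / (nodal Y id).eval t) n) :
    ∃ Z : Finset ℝ, ↑Z ⊆ K ∧ Z.card = n ∧ ∀ z ∈ Z, f z = 0 := by
  obtain ⟨Z, hZ, hZn, hZ0⟩ := hf.exists_finset_zeros hK hKc hμ hinf
    (continuousOn_div_nodal hKL hfc hY)
  exact ⟨Z, hZ, hZn, fun z hz ↦ (div_eq_zero_iff.1 (hZ0 z hz)).resolve_right
    (eval_nodal_ne_zero_of_disjoint hKL hY (hZ hz))⟩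

end OrthogonalToDegreeLT

lemma orthogonalToDegreeLT_sum_div_nodal {μ : Measure ℝ} [IsFiniteMeasure μ] {K L : Set ℝ}
    (hK : IsCompact K) (hKL : Disjoint K L) (hμ : ∀ᵐ t ∂μ, t ∈ K) {ι : Type*} {s : Finset ι}
    {h : ι → ℝ → ℝ} (hh : ∀ i ∈ s, ContinuousOn (h i) K) {c : ℝ} (hc : c ≠ 0) {n : ℕ}
    {P₀ : ℝ[X]} (hP₀ : P₀.degree < n) {P : ι → ℝ[X]} (hP : ∀ i ∈ s, (P i).degree < (n + 1 : ℕ))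
    {Z : Finset ℝ} (hZ : ↑Z ⊆ L) (hn : n ≤ Z.card)
    (h0 : ∀ z ∈ Z, P₀.eval z + c * ∑ i ∈ s, (P i).eval z * cauchyTransform μ (h i) z = 0) :
    OrthogonalToDegreeLT μ (fun t ↦ (∑ i ∈ s, (P i).eval t * h i t) / (nodal Z id).eval t)
      (Z.card - n) := by
  intro Q hQ
  set W : ℝ[X] := nodal Z id
  have hterm : ∀ i ∈ s, ∫ t, (Q * P i).eval t * (h i t / W.eval t) ∂μ =
      -∑ z ∈ Z, nodalWeight Z id z * (Q * P i).eval z * cauchyTransform μ (h i) z := fun i hi ↦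
    integral_eval_mul_div_nodal hK hKL hμ (hh i hi) hZ <|
      (degree_mul_lt_of_lt hQ (hP i hi)).trans_le (by exact_mod_cast (by omega))
  have hsum : ∫ t, Q.eval t * ((∑ i ∈ s, (P i).eval t * h i t) / W.eval t) ∂μ =
      -∑ z ∈ Z, nodalWeight Z id z * Q.eval z *
        ∑ i ∈ s, (P i).eval z * cauchyTransform μ (h i) z := by
    have hexpand (t : ℝ) : Q.eval t * ((∑ i ∈ s, (P i).eval t * h i t) / W.eval t) =
        ∑ i ∈ s, (Q * P i).eval t * (h i t / W.eval t) := by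
      simp only [Finset.sum_div, Finset.mul_sum, eval_mul]
      exact Finset.sum_congr rfl fun i _ ↦ by ring
    simp_rw [hexpand]
    rw [integral_finsetSum _ fun i hi ↦ integrable_eval_mul hK hμ
      (continuousOn_div_nodal hKL (hh i hi) hZ) _, Finset.sum_congr rfl hterm,
      Finset.sum_neg_distrib, Finset.sum_comm]
    simp only [Finset.mul_sum, eval_mul, mul_assoc]
  have hres : ∑ z ∈ Z, nodalWeight Z id z * (Q * P₀).eval z = 0 :=
    sum_nodalWeight_mul_eval_eq_zero <| (degree_mul_lt_of_lt hQ hP₀).trans_le (by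
      exact_mod_cast (by omega))
  refine (mul_eq_zero.1 ?_).resolve_left hc
  rw [hsum, mul_neg, Finset.mul_sum, ← Finset.sum_neg_distrib, ← hres]
  refine Finset.sum_congr rfl fun z hz ↦ ?_
  rw [eval_mul]
  linear_combination -(nodalWeight Z id z * Q.eval z) * h0 z hz

end Orthogonality

/-! ### Multi-indices -/

section MultiIndices

/-- The multi-indices `n_0, …, n_m` with `n_l ≤ n_k + 1` for `k < l`. This class contains the
decreasing multi-indices and, unlike `Decr`, also those obtained from them by lowering one
component by `1`. -/
def AlmostDecr (m : ℕ) (n : ℕ → ℕ) : Prop := ∀ k l, k < l → l ≤ m → n l ≤ n k + 1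

variable {m : ℕ} {n : ℕ → ℕ}

lemma AlmostDecr.tail (h : AlmostDecr (m + 1) n) : AlmostDecr m fun k ↦ n (k + 1) :=
  fun k l hkl hl ↦ h (k + 1) (l + 1) (by omega) (by omega)

lemma Decr.le (h : Decr m n) {k l : ℕ} (hkl : k ≤ l) (hl : l ≤ m) : n l ≤ n k := by
  induction l, hkl using Nat.le_induction with
  | base => rfl
  | succ l _ ih => exact (h l (by omega)).trans (ih (by omega))

lemma Decr.almostDecr (h : Decr m n) : AlmostDecr m n :=
  fun _ _ hkl hl ↦ (h.le hkl.le hl).trans (Nat.le_succ _)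

lemma Decr.almostDecr_update (h : Decr m n) (j : ℕ) :
    AlmostDecr m (Function.update n j (n j - 1)) := by
  intro k l hkl hl
  have := h.le hkl.le hl
  grind [Function.update_apply]

lemma Decr.one_le_zero (h : Decr m n) (hpos : 1 ≤ msum m n) : 1 ≤ n 0 := by
  by_contra! h0
  have : msum m n = 0 := Finset.sum_eq_zero fun k hk ↦ by
    have := h.le k.zero_le (Finset.mem_range_succ_iff.1 hk)
    omega
  omega

lemma msum_succ (m : ℕ) (n : ℕ → ℕ) : msum (m + 1) n = n 0 + msum m fun k ↦ n (k + 1) := by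
  rw [msum, Finset.sum_range_succ', add_comm, msum]

lemma msum_update_add_one {j : ℕ} (hj : j ≤ m) (hnj : 1 ≤ n j) :
    msum m (Function.update n j (n j - 1)) + 1 = msum m n := by
  have hmem : j ∈ Finset.range (m + 1) := by simpa [Nat.lt_succ_iff] using hj
  rw [msum, msum, Finset.sum_update_of_mem hmem,
    ← Finset.sum_sdiff (Finset.singleton_subset_iff.2 hmem), Finset.sum_singleton]
  omega

end MultiIndices

/-! ### Nikishin systems on the real line -/

section RealForms

/-- The restriction to the real line of the Cauchy transform `ŝ_{1,k}` of `⟨σ_1, …, σ_k⟩`, where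
`σ_i = e i • μ i`, with the convention `ŝ_{1,0} = 1`. -/
def realWt : (ℕ → Measure ℝ) → (ℕ → ℝ) → ℕ → ℝ → ℝ
  | _, _, 0 => fun _ ↦ 1
  | μ, e, k + 1 => fun x ↦
    e 1 * cauchyTransform (μ 1) (realWt (fun i ↦ μ (i + 1)) (fun i ↦ e (i + 1)) k) x

/-- The linear form `𝒜_{n,0} = ∑ a_k ŝ_{1,k}` on the real line. -/
def realLinForm (μ : ℕ → Measure ℝ) (e : ℕ → ℝ) (m : ℕ) (A : ℕ → ℝ[X]) (x : ℝ) : ℝ :=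
  ∑ k ∈ Finset.range (m + 1), (A k).eval x * realWt μ e k x

variable (μ : ℕ → Measure ℝ) (e : ℕ → ℝ) (m : ℕ) (A : ℕ → ℝ[X])

lemma realWt_succ (k : ℕ) (x : ℝ) :
    realWt μ e (k + 1) x =
      e 1 * cauchyTransform (μ 1) (realWt (fun i ↦ μ (i + 1)) (fun i ↦ e (i + 1)) k) x := rfl

lemma realLinForm_succ (x : ℝ) :
    realLinForm μ e (m + 1) A x = (A 0).eval x + e 1 * ∑ k ∈ Finset.range (m + 1),
      (A (k + 1)).eval x *
        cauchyTransform (μ 1) (realWt (fun i ↦ μ (i + 1)) (fun i ↦ e (i + 1)) k) x := by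
  rw [realLinForm, Finset.sum_range_succ', add_comm, Finset.mul_sum]
  simp only [realWt, mul_one, mul_left_comm]

lemma realLinForm_sub_smul (A B : ℕ → ℝ[X]) (c x : ℝ) :
    realLinForm μ e m (fun k ↦ A k - c • B k) x =
      realLinForm μ e m A x - c * realLinForm μ e m B x := by
  simp only [realLinForm, Finset.mul_sum, ← Finset.sum_sub_distrib, eval_sub, eval_smul,
    smul_eq_mul, sub_mul, mul_assoc]

lemma nikhat_shift (j k : ℕ) (z : ℂ) :
    nikhat (fun i ↦ μ (i + 1)) (fun i ↦ e (i + 1)) j k z = nikhat μ e (j + 1) k z := by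
  induction k generalizing j z with
  | zero => rfl
  | succ k ih => simp only [nikhat, ih]

lemma nikhat_one_ofReal (k : ℕ) (x : ℝ) : nikhat μ e 1 k x = realWt μ e (k + 1) x := by
  induction k generalizing μ e x with
  | zero =>
    simp only [nikhat, realWt, cauchyTransform]
    push_cast [← integral_complex_ofReal]
    rfl
  | succ k ih =>
    have htail (t : ℝ) : nikhat μ e 2 k t =
        realWt (fun i ↦ μ (i + 1)) (fun i ↦ e (i + 1)) (k + 1) t := by rw [← ih, nikhat_shift]
    simp only [nikhat, realWt_succ _ _ (k + 1), cauchyTransform, htail]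
    push_cast [← integral_complex_ofReal]
    rfl

lemma wt_zero_ofReal (k : ℕ) (x : ℝ) : wt μ e 0 k x = realWt μ e k x := by
  cases k with
  | zero => simp [wt, realWt]
  | succ k => simp [wt, nikhat_one_ofReal]

lemma linForm_zero_ofReal (x : ℝ) : linForm μ e m 0 A x = realLinForm μ e m A x := by
  have heval (P : ℝ[X]) : aeval (x : ℂ) P = ((P.eval x : ℝ) : ℂ) :=
    aeval_algebraMap_apply_eq_algebraMap_eval x P
  simp [linForm, realLinForm, wt_zero_ofReal, ← Nat.range_succ_eq_Icc_zero, heval]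

lemma sInt_zero_ofReal (k : ℕ) (f : ℝ → ℝ) :
    sInt μ e 0 k (fun x ↦ (f x : ℂ)) = (e 0 * ∫ x, f x * realWt μ e k x ∂μ 0 : ℝ) := by
  simp only [sInt, wt_zero_ofReal]
  push_cast [← integral_complex_ofReal]
  rfl

end RealForms

lemma msupport_eq_support (μ : Measure ℝ) : msupport μ = μ.support := by
  ext x
  simp only [msupport, Measure.support_eq_forall_isOpen, mem_ofPred_eq, pos_iff_ne_zero]
  exact forall_congr' fun U ↦ forall_comm

namespace NikSys

section Basic

variable {m : ℕ} (S : NikSys m)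

instance (j : ℕ) : IsFiniteMeasure (S.μ j) := S.fin j

/-- The interval `Δ_j`, the convex hull of the support of `σ_j`. -/
def Δ (j : ℕ) : Set ℝ := Icc (S.a j) (S.b j)

lemma isCompact_Δ (j : ℕ) : IsCompact (S.Δ j) := isCompact_Icc

lemma ordConnected_Δ (j : ℕ) : (S.Δ j).OrdConnected := ordConnected_Icc

lemma disjoint_Δ {j : ℕ} (hj : j < m) : Disjoint (S.Δ j) (S.Δ (j + 1)) :=
  disjoint_iff_inter_eq_empty.2 (S.disj j hj)

lemma ae_mem_Δ {j : ℕ} (hj : j ≤ m) : ∀ᵐ x ∂S.μ j, x ∈ S.Δ j := by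
  filter_upwards [Measure.support_mem_ae (μ := S.μ j)] with x hx
  rw [Δ, ← S.hull j hj, msupport_eq_support]
  exact subset_convexHull ℝ _ hx

lemma infinite_support {j : ℕ} (hj : j ≤ m) : (S.μ j).support.Infinite :=
  msupport_eq_support (S.μ j) ▸ S.inf j hj

lemma e_ne_zero (j : ℕ) : S.e j ≠ 0 := by rcases S.sgn j with h | h <;> simp [h]

end Basic

/-- The Nikishin system `N(σ_1, …, σ_{m+1})` obtained from `N(σ_0, …, σ_{m+1})` by dropping the
first measure. -/
def tail {m : ℕ} (S : NikSys (m + 1)) : NikSys m where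
  μ j := S.μ (j + 1)
  e j := S.e (j + 1)
  a j := S.a (j + 1)
  b j := S.b (j + 1)
  fin j := S.fin (j + 1)
  sgn j := S.sgn (j + 1)
  hull j hj := S.hull (j + 1) (by omega)
  inf j hj := S.inf (j + 1) (by omega)
  disj j hj := S.disj (j + 1) (by omega)

lemma continuousOn_realWt {m k : ℕ} (S : NikSys m) (hk : k ≤ m) :
    ContinuousOn (realWt S.μ S.e k) (S.Δ 0) := by
  induction m generalizing k with
  | zero =>
    obtain rfl : k = 0 := by omega
    exact continuousOn_const
  | succ m ih =>
    cases k with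
    | zero => exact continuousOn_const
    | succ k =>
      exact continuousOn_const.mul <| continuousOn_cauchyTransform (S.isCompact_Δ 1)
        (S.isCompact_Δ 0) (S.disjoint_Δ m.succ_pos).symm (S.ae_mem_Δ (by omega))
        (ih S.tail (by omega))

lemma continuousOn_realLinForm {m : ℕ} (S : NikSys m) (A : ℕ → ℝ[X]) :
    ContinuousOn (realLinForm S.μ S.e m A) (S.Δ 0) :=
  continuousOn_finsetSum _ fun k hk ↦ (A k).continuous.continuousOn.mul
    (S.continuousOn_realWt (Finset.mem_range_succ_iff.1 hk))

/-- The functions `ŝ_{1,k}` form an AT-system on `Δ_0`: dividing by the nodal polynomial of the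
zeros turns the zeros of a form on `Δ_0` into orthogonality relations for a form of the tail
system on `Δ_1`, and these yield zeros there. -/
theorem eq_zero_of_realLinForm_eq_zero {m : ℕ} (S : NikSys m) {n : ℕ → ℕ} (hn : AlmostDecr m n)
    {A : ℕ → ℝ[X]} (hA : ∀ k ≤ m, (A k).degree < n k) {Z : Finset ℝ} (hZ : ↑Z ⊆ S.Δ 0)
    (hcard : msum m n ≤ Z.card) (h0 : ∀ z ∈ Z, realLinForm S.μ S.e m A z = 0) :
    ∀ k ≤ m, A k = 0 := by
  induction m generalizing n A Z with
  | zero =>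
    intro k hk
    obtain rfl : k = 0 := by omega
    refine eq_zero_of_degree_lt_of_eval_finset_eq_zero Z
      ((hA 0 le_rfl).trans_le (by exact_mod_cast (by simpa [msum] using hcard))) fun z hz ↦ ?_
    simpa [realLinForm, realWt] using h0 z hz
  | succ m ih =>
    rw [msum_succ] at hcard
    have hdisj : Disjoint (S.Δ 1) (S.Δ 0) := (S.disjoint_Δ m.succ_pos).symm
    have hAtail : ∀ k ∈ Finset.range (m + 1), (A (k + 1)).degree < (n 0 + 1 : ℕ) := fun k hk ↦
      (hA (k + 1) (by simpa using hk)).trans_le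
        (by exact_mod_cast hn 0 (k + 1) k.succ_pos (by simpa using hk))
    have horth : OrthogonalToDegreeLT (S.μ 1) (fun t ↦
        realLinForm S.tail.μ S.tail.e m (fun k ↦ A (k + 1)) t / (nodal Z id).eval t)
        (Z.card - n 0) :=
      orthogonalToDegreeLT_sum_div_nodal (S.isCompact_Δ 1) hdisj (S.ae_mem_Δ (by omega))
        (fun k hk ↦ S.tail.continuousOn_realWt (Finset.mem_range_succ_iff.1 hk)) (S.e_ne_zero 1)
        (hA 0 (by omega)) hAtail hZ (by omega)
        fun z hz ↦ (realLinForm_succ S.μ S.e m A z).symm.trans (h0 z hz)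
    obtain ⟨Z', hZ', hZ'card, hZ'0⟩ := horth.exists_finset_zeros_of_div_nodal (S.isCompact_Δ 1)
      (S.ordConnected_Δ 1) hdisj (S.ae_mem_Δ (by omega)) (S.infinite_support (by omega))
      (S.tail.continuousOn_realLinForm _) hZ
    have htail : ∀ k ≤ m, A (k + 1) = 0 := ih S.tail hn.tail (fun k hk ↦ hA (k + 1) (by omega)) hZ'
      (by omega) hZ'0
    have hhead : A 0 = 0 := by
      refine eq_zero_of_degree_lt_of_eval_finset_eq_zero Z
        ((hA 0 (by omega)).trans_le (by exact_mod_cast (by omega))) fun z hz ↦ ?_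
      rw [← h0 z hz, realLinForm_succ, Finset.sum_eq_zero fun k hk ↦ by
        rw [htail k (Finset.mem_range_succ_iff.1 hk), eval_zero, zero_mul], mul_zero, add_zero]
    rintro (_ | k) hk
    exacts [hhead, htail k (by omega)]

/-- The Cauchy transform of `f dσ_0` inherits the orthogonality relations with respect to the tail
system; dividing by the nodal polynomial of its zeros on `Δ_1` gives additional orthogonality
relations for `f`. -/
theorem exists_finset_zeros_of_orthogonal {m : ℕ} (S : NikSys m) {n : ℕ → ℕ} (hn : AlmostDecr m n)
    {f : ℝ → ℝ} (hfc : ContinuousOn f (S.Δ 0))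
    (hf : ∀ k ≤ m, OrthogonalToDegreeLT (S.μ 0) (fun x ↦ f x * realWt S.μ S.e k x) (n k)) :
    ∃ Z : Finset ℝ, ↑Z ⊆ S.Δ 0 ∧ Z.card = msum m n ∧ ∀ z ∈ Z, f z = 0 := by
  induction m generalizing n f with
  | zero =>
    have hf0 : OrthogonalToDegreeLT (S.μ 0) f (n 0) := by simpa [realWt] using hf 0 le_rfl
    simpa [msum] using hf0.exists_finset_zeros (S.isCompact_Δ 0) (S.ordConnected_Δ 0)
      (S.ae_mem_Δ le_rfl) (S.infinite_support le_rfl) hfc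
  | succ m ih =>
    have hdisj : Disjoint (S.Δ 0) (S.Δ 1) := S.disjoint_Δ m.succ_pos
    have hf0 : OrthogonalToDegreeLT (S.μ 0) f (n 0) := by
      simpa [realWt] using hf 0 (Nat.zero_le _)
    have hμ0 := S.ae_mem_Δ (Nat.zero_le (m + 1))
    have hμ1 := S.ae_mem_Δ (Nat.le_add_left 1 m)
    have htail : ∀ k ≤ m, OrthogonalToDegreeLT (S.tail.μ 0)
        (fun x ↦ cauchyTransform (S.μ 0) f x * realWt S.tail.μ S.tail.e k x) (n (k + 1)) := by
      intro k hk
      refine hf0.cauchyTransform_mul (S.isCompact_Δ 0) (S.isCompact_Δ 1) hdisj hμ0 hμ1 hfc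
        (S.tail.continuousOn_realWt hk) (hn 0 (k + 1) k.succ_pos (by omega)) fun Q hQ ↦ ?_
      refine (mul_eq_zero.1 ?_).resolve_left (S.e_ne_zero 1)
      rw [← integral_const_mul, ← hf (k + 1) (by omega) Q hQ]
      congr! 2
      simp only [realWt, tail]
      ring
    obtain ⟨Z, hZ, hZcard, hZ0⟩ := ih S.tail hn.tail
      (continuousOn_cauchyTransform (S.isCompact_Δ 0) (S.isCompact_Δ 1) hdisj hμ0 hfc) htail
    rw [msum_succ, ← hZcard]
    exact (hf0.div_nodal (S.isCompact_Δ 0) hdisj hμ0 hfc hZ hZ0).exists_finset_zeros_of_div_nodal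
      (S.isCompact_Δ 0) (S.ordConnected_Δ 0) hdisj hμ0 (S.infinite_support (Nat.zero_le _)) hfc hZ

end NikSys

/-! ### Mixed type orthogonality -/

/-- The real form of the orthogonality conditions in `IsMOP`: the form `𝒜_{n,0}` is orthogonal to
polynomials of degree `< n_{2,k}` with respect to `⟨σ²_0, …, σ²_k⟩`, for `k = 0, …, m₂`. -/
def MixedOrthogonal {m₁ m₂ : ℕ} (S1 : NikSys m₁) (S2 : NikSys m₂) (n2 : ℕ → ℕ) (A : ℕ → ℝ[X]) :
    Prop :=
  ∀ k ≤ m₂, OrthogonalToDegreeLT (S2.μ 0)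
    (fun x ↦ realLinForm S1.μ S1.e m₁ A x * realWt S2.μ S2.e k x) (n2 k)

section MixedOrthogonality

variable {m₁ m₂ : ℕ} {S1 : NikSys m₁} {S2 : NikSys m₂} {n1 n2 : ℕ → ℕ} {A B : ℕ → ℝ[X]}

lemma continuousOn_realLinForm_mul_realWt (hΔ : S2.Δ 0 ⊆ S1.Δ 0) (A : ℕ → ℝ[X]) {k : ℕ}
    (hk : k ≤ m₂) :
    ContinuousOn (fun x ↦ realLinForm S1.μ S1.e m₁ A x * realWt S2.μ S2.e k x) (S2.Δ 0) :=
  ((S1.continuousOn_realLinForm A).mono hΔ).mul (S2.continuousOn_realWt hk)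

lemma IsMOP.mixedOrthogonal (hΔ : S2.Δ 0 ⊆ S1.Δ 0) (h : IsMOP m₁ m₂ S1 S2 n1 n2 A) :
    MixedOrthogonal S1 S2 n2 A := by
  refine fun k hk ↦ .of_integral_pow_mul (S2.isCompact_Δ 0) (S2.ae_mem_Δ m₂.zero_le)
    (continuousOn_realLinForm_mul_realWt hΔ A hk) fun i hi ↦ ?_
  have hint := h.2.2 k hk i hi
  simp only [linForm_zero_ofReal, ← Complex.ofReal_pow, ← Complex.ofReal_mul, sInt_zero_ofReal,
    Complex.ofReal_eq_zero] at hint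
  simpa only [mul_assoc] using (mul_eq_zero.1 hint).resolve_left (S2.e_ne_zero 0)

namespace MixedOrthogonal

lemma sub_smul (hΔ : S2.Δ 0 ⊆ S1.Δ 0) (hA : MixedOrthogonal S1 S2 n2 A)
    (hB : MixedOrthogonal S1 S2 n2 B) (c : ℝ) :
    MixedOrthogonal S1 S2 n2 fun j ↦ A j - c • B j := by
  intro k hk
  simpa only [realLinForm_sub_smul, sub_mul, mul_assoc] using
    (hA k hk).sub_const_mul (S2.isCompact_Δ 0) (S2.ae_mem_Δ m₂.zero_le)
      (continuousOn_realLinForm_mul_realWt hΔ A hk) (continuousOn_realLinForm_mul_realWt hΔ B hk)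
      (hB k hk) c

theorem eq_zero (hΔ : S2.Δ 0 ⊆ S1.Δ 0) (h1 : AlmostDecr m₁ n1) (h2 : AlmostDecr m₂ n2)
    (hsum : msum m₁ n1 ≤ msum m₂ n2) (h : MixedOrthogonal S1 S2 n2 A)
    (hdeg : ∀ j ≤ m₁, (A j).degree < n1 j) : ∀ j ≤ m₁, A j = 0 := by
  obtain ⟨Z, hZ, hZcard, hZ0⟩ := S2.exists_finset_zeros_of_orthogonal h2
    ((S1.continuousOn_realLinForm A).mono hΔ) h
  exact S1.eq_zero_of_realLinForm_eq_zero h1 hdeg (hZ.trans hΔ) (hsum.trans_eq hZcard.symm) hZ0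

theorem eq_zero_of_degree_lt (hΔ : S2.Δ 0 ⊆ S1.Δ 0) (h1 : Decr m₁ n1) (h2 : AlmostDecr m₂ n2)
    (hsum : msum m₂ n2 + 1 = msum m₁ n1) (h : MixedOrthogonal S1 S2 n2 A)
    (hdeg : ∀ j ≤ m₁, (A j).degree < n1 j) {j : ℕ} (hj : j ≤ m₁) (hnj : 1 ≤ n1 j)
    (hlt : (A j).degree < (n1 j - 1 : ℕ)) : ∀ i ≤ m₁, A i = 0 := by
  have hupdate := msum_update_add_one hj hnj
  refine h.eq_zero hΔ (h1.almostDecr_update j) h2 (by omega) fun i hi ↦ ?_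
  rcases eq_or_ne i j with rfl | hij
  · rwa [Function.update_self]
  · rw [Function.update_of_ne hij]
    exact hdeg i hi

end MixedOrthogonal

lemma IsMOP.degree_eq (hΔ : S2.Δ 0 ⊆ S1.Δ 0) (h1 : Decr m₁ n1) (h2 : AlmostDecr m₂ n2)
    (hsum : msum m₂ n2 + 1 = msum m₁ n1) (h : IsMOP m₁ m₂ S1 S2 n1 n2 A) {j : ℕ} (hj : j ≤ m₁)
    (hnj : 1 ≤ n1 j) : (A j).degree = (n1 j - 1 : ℕ) := by
  refine le_antisymm ((degree_le_iff_coeff_zero _ _).2 fun i hi ↦ ?_) (le_of_not_gt fun hlt ↦ ?_)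
  · rw [Nat.cast_lt] at hi
    exact coeff_eq_zero_of_degree_lt ((h.1 j hj).trans_le (by exact_mod_cast (by omega)))
  · obtain ⟨i, hi, hne⟩ := h.2.1
    exact hne ((h.mixedOrthogonal hΔ).eq_zero_of_degree_lt hΔ h1 h2 hsum h.1 hj hnj hlt i hi)

lemma IsMOP.exists_eq_smul (hΔ : S2.Δ 0 ⊆ S1.Δ 0) (h1 : Decr m₁ n1) (h2 : AlmostDecr m₂ n2)
    (hsum : msum m₂ n2 + 1 = msum m₁ n1) (hA : IsMOP m₁ m₂ S1 S2 n1 n2 A)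
    (hB : IsMOP m₁ m₂ S1 S2 n1 n2 B) : ∃ c : ℝ, c ≠ 0 ∧ ∀ j ≤ m₁, B j = c • A j := by
  have hn0 : 1 ≤ n1 0 := h1.one_le_zero (by omega)
  obtain ⟨c, hc, hlt⟩ := exists_ne_zero_degree_sub_smul_lt
    (hA.degree_eq hΔ h1 h2 hsum m₁.zero_le hn0) (hB.degree_eq hΔ h1 h2 hsum m₁.zero_le hn0)
  have horth := (hB.mixedOrthogonal hΔ).sub_smul hΔ (hA.mixedOrthogonal hΔ) c
  have hdeg : ∀ j ≤ m₁, (B j - c • A j).degree < n1 j := fun j hj ↦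
    (degree_sub_le _ _).trans_lt
      (max_lt (hB.1 j hj) ((degree_smul_le c (A j)).trans_lt (hA.1 j hj)))
  exact ⟨c, hc, fun j hj ↦ sub_eq_zero.1
    (horth.eq_zero_of_degree_lt hΔ h1 h2 hsum hdeg m₁.zero_le hn0 hlt j hj)⟩

end MixedOrthogonality

theorem mixed_mop_normal_general {m₁ m₂ : ℕ} {S1 : NikSys m₁} {S2 : NikSys m₂}
    (hΔ : S2.Δ 0 ⊆ S1.Δ 0) {n1 n2 : ℕ → ℕ} (h1 : Decr m₁ n1) (h2 : AlmostDecr m₂ n2)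
    (hsum : msum m₂ n2 + 1 = msum m₁ n1) :
    (∀ A : ℕ → ℝ[X], IsMOP m₁ m₂ S1 S2 n1 n2 A →
      ∀ j ≤ m₁, (n1 j = 0 → A j = 0) ∧
        (1 ≤ n1 j → (A j).degree = ((n1 j - 1 : ℕ) : WithBot ℕ))) ∧
    (∀ A A' : ℕ → ℝ[X],
      IsMOP m₁ m₂ S1 S2 n1 n2 A → IsMOP m₁ m₂ S1 S2 n1 n2 A' →
      ∃ c : ℝ, c ≠ 0 ∧ ∀ j ≤ m₁, A' j = c • A j) := by
  refine ⟨fun A hA j hj ↦ ⟨fun hnj ↦ ?_, hA.degree_eq hΔ h1 h2 hsum hj⟩,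
    fun A A' hA hA' ↦ hA.exists_eq_smul hΔ h1 h2 hsum hA'⟩
  have hdeg := hA.1 j hj
  rwa [hnj, Nat.cast_zero, Nat.WithBot.lt_zero_iff, degree_eq_bot] at hdeg

/-- **Normality.** For `n = (n₁;n₂) ∈ ℤ₊^{m₁+1}(•) × ℤ₊^{m₂+1}(•)` with
`|n₁| ≥ 1` and Nikishin systems `S¹, S²` with `σ¹_0 = σ²_0`, the multi-index `n` is
normal: every mixed type multiple orthogonal polynomial system has
`deg a_{n,j} = n_{1,j} - 1` for all `j`, and any two such systems are proportional. -/
theorem mixed_mop_normal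
    (m₁ m₂ : ℕ) (S1 : NikSys m₁) (S2 : NikSys m₂)
    (hbase : S1.μ 0 = S2.μ 0 ∧ S1.e 0 = S2.e 0)
    (n1 n2 : ℕ → ℕ) (h1 : Decr m₁ n1) (h2 : Decr m₂ n2)
    (hsum : msum m₂ n2 + 1 = msum m₁ n1) (hone : 1 ≤ msum m₁ n1) :
    (∀ A : ℕ → Polynomial ℝ, IsMOP m₁ m₂ S1 S2 n1 n2 A →
      ∀ j ≤ m₁, (n1 j = 0 → A j = 0) ∧
        (1 ≤ n1 j → (A j).degree = ((n1 j - 1 : ℕ) : WithBot ℕ))) ∧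
    (∀ A A' : ℕ → Polynomial ℝ,
      IsMOP m₁ m₂ S1 S2 n1 n2 A → IsMOP m₁ m₂ S1 S2 n1 n2 A' →
      ∃ c : ℝ, c ≠ 0 ∧ ∀ j ≤ m₁, A' j = c • A j) := by
  have hΔ : S2.Δ 0 = S1.Δ 0 := by
    rw [NikSys.Δ, NikSys.Δ, ← S2.hull 0 m₂.zero_le, ← S1.hull 0 m₁.zero_le, hbase.1]
  exact mixed_mop_normal_general hΔ.subset h1 h2.almostDecr hsum

end
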